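/- arXiv:2501.00354 — 2 statements merged into one kernel-verified Lean document; each statement's English description precedes it below -/
import Mathlib

section
/- Let S be a finite index set, and for each t ∈ ℕ let D_s(t), Dⁱ_s(t), Dᵒ_s(t) be nonnegative reals with D_s(t+1) = D_s(t) − min{Dᵒ_s(t), D_s(t)} + Dⁱ_s(t), and let Q(t) ≥ 0 with Q(0) = 0 satisfy Q(t+1) = max{Q(t) + φ(t), 0} for real φ(t). Define L(t) = Q(t)²/2 + (1/2)∑_{s∈S} D_s(t)². Suppose D_s(0) = 0 for all s, and suppose B is a constant such that for all t: B ≥ (1/2)∑_{s∈S}(Dⁱ_s(t)² + Dᵒ_s(t)²) + φ(t)²/2, and moreover ∑_{s∈S} D_s(t)·(Dⁱ_s(t) − Dᵒ_s(t)) + Q(t)·φ(t) ≤ V·(C* − C(t)) for a constant C*, a real cost sequence C(t), and a constant V > 0. Then for every T ≥ 1, (1/T)∑_{t=0}^{T-1} C(t) ≤ C* + B/V. -/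
/-!
The proof is a Lyapunov drift argument with `L t = Q t ^ 2 / 2 + (1 / 2) * ∑ s ∈ S, D s t ^ 2`.
Squaring the two recursions (`half_sq_queue_le`, `half_sq_virtual_le`) bounds `L (t + 1) - L t` by
`B` plus the cross terms that the comparison inequality controls, so
`L (t + 1) - L t + V * C t ≤ B + V * Cstar`. Summing over `t < T` telescopes; since `L 0 = 0` and
`L T ≥ 0`, dividing by `V * T` gives the bound.
-/

/-- One-slot drift of a physical queue of backlog `d`, with arrival `i` and service `o`. The backlog
left after service is `max (d - o) 0`, which is at most `d` and has square at most `(d - o) ^ 2`. -/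
lemma half_sq_queue_le {d i o : ℝ} (hd : 0 ≤ d) (hi : 0 ≤ i) (ho : 0 ≤ o) :
    (1 / 2) * (d - min o d + i) ^ 2 ≤
      (1 / 2) * d ^ 2 + (1 / 2) * (i ^ 2 + o ^ 2) + d * (i - o) := by
  rcases le_total o d with h | h
  · rw [min_eq_left h]
    nlinarith [mul_nonneg ho hi]
  · rw [min_eq_right h]
    nlinarith [mul_nonneg hd hi, sq_nonneg (d - o)]

lemma half_sq_virtual_le (q p : ℝ) :
    (max (q + p) 0) ^ 2 / 2 ≤ q ^ 2 / 2 + p ^ 2 / 2 + q * p := by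
  rcases le_total (q + p) 0 with h | h
  · rw [max_eq_right h]
    nlinarith [sq_nonneg (q + p)]
  · rw [max_eq_left h]
    nlinarith

/-- Deterministic (pathwise) core of Theorem 2: the per-slot
comparison inequality, telescoped, yields the optimality gap
(1/T)∑ C(t) ≤ C* + B/V. -/
theorem drift_plus_penalty_cost_gap {ι : Type*} (S : Finset ι)
    (D Di Do : ι → ℕ → ℝ) (Q φ C : ℕ → ℝ) (B V Cstar : ℝ)
    (hDnn : ∀ s ∈ S, ∀ t : ℕ, 0 ≤ D s t)
    (hDinn : ∀ s ∈ S, ∀ t : ℕ, 0 ≤ Di s t)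
    (hDonn : ∀ s ∈ S, ∀ t : ℕ, 0 ≤ Do s t)
    (hD0 : ∀ s ∈ S, D s 0 = 0)
    (hDrec : ∀ s ∈ S, ∀ t : ℕ, D s (t + 1) = D s t - min (Do s t) (D s t) + Di s t)
    (hQnn : ∀ t : ℕ, 0 ≤ Q t) (hQ0 : Q 0 = 0)
    (hQrec : ∀ t : ℕ, Q (t + 1) = max (Q t + φ t) 0)
    (hB : ∀ t : ℕ, (1 / 2) * ∑ s ∈ S, (Di s t ^ 2 + Do s t ^ 2) + φ t ^ 2 / 2 ≤ B)
    (hV : 0 < V)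
    (hcomp : ∀ t : ℕ,
      ∑ s ∈ S, D s t * (Di s t - Do s t) + Q t * φ t ≤ V * (Cstar - C t)) :
    ∀ T : ℕ, 1 ≤ T →
      (1 / (T : ℝ)) * ∑ t ∈ Finset.range T, C t ≤ Cstar + B / V := by
  have drift : ∀ t, Q (t + 1) ^ 2 / 2 + (1 / 2) * ∑ s ∈ S, D s (t + 1) ^ 2 + V * C t ≤
      Q t ^ 2 / 2 + (1 / 2) * ∑ s ∈ S, D s t ^ 2 + (B + V * Cstar) := by
    intro t
    have hD : (1 / 2) * ∑ s ∈ S, D s (t + 1) ^ 2 ≤ (1 / 2) * ∑ s ∈ S, D s t ^ 2 +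
        (1 / 2) * ∑ s ∈ S, (Di s t ^ 2 + Do s t ^ 2) + ∑ s ∈ S, D s t * (Di s t - Do s t) := by
      simp only [Finset.mul_sum, ← Finset.sum_add_distrib]
      refine Finset.sum_le_sum fun s hs => ?_
      have h := half_sq_queue_le (hDnn s hs t) (hDinn s hs t) (hDonn s hs t)
      rw [← hDrec s hs t] at h
      linarith
    have hQ := half_sq_virtual_le (Q t) (φ t)
    rw [← hQrec t] at hQ
    linarith [hB t, hcomp t]
  have telescoped : ∀ T : ℕ, Q T ^ 2 / 2 + (1 / 2) * ∑ s ∈ S, D s T ^ 2 +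
      V * ∑ t ∈ Finset.range T, C t ≤ T * (B + V * Cstar) := by
    intro T
    induction T with
    | zero =>
      have h : ∑ s ∈ S, D s 0 ^ 2 = 0 :=
        Finset.sum_eq_zero fun s hs => by rw [hD0 s hs]; norm_num
      simp [h, hQ0]
    | succ n ih =>
      rw [Finset.sum_range_succ]
      push_cast
      linarith [drift n]
  intro T hT
  have hT' : (0 : ℝ) < T := by exact_mod_cast hT
  have hS : 0 ≤ ∑ s ∈ S, D s T ^ 2 := Finset.sum_nonneg fun s _ => sq_nonneg _
  have key : V * ∑ t ∈ Finset.range T, C t ≤ T * (B + V * Cstar) := by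
    linarith [telescoped T, sq_nonneg (Q T)]
  have hrhs : Cstar + B / V = (B + V * Cstar) / V := by
    field_simp
    ring
  rw [hrhs, one_div_mul_eq_div, div_le_div_iff₀ hT' hV]
  linarith
end

section
/- Let S be a finite index set, and for each t ∈ ℕ let D_s(t), Dⁱ_s(t), Dᵒ_s(t) be nonnegative reals with D_s(0) = 0 and D_s(t+1) = D_s(t) − min{Dᵒ_s(t), D_s(t)} + Dⁱ_s(t); let Q(t) ≥ 0 with Q(0) = 0 and Q(t+1) = max{Q(t) + φ(t), 0} for real φ(t). Define L(t) = Q(t)²/2 + (1/2)∑_{s∈S} D_s(t)². Let V ≥ 0, let C(t) be a real cost sequence with C_min ≤ C(t) ≤ C_max for all t, let ε > 0, and let B be a constant with B ≥ (1/2)∑_{s∈S}(Dⁱ_s(t)² + Dᵒ_s(t)²) + φ(t)²/2 for all t. Suppose that for all t there exist reals φ•(t) ≤ −ε, C•(t) ∈ [C_min, C_max], and a•_s(t) − b•_s(t) ≤ −ε for each s, such that V·C(t) + ∑_{s∈S} D_s(t)·(Dⁱ_s(t) − Dᵒ_s(t)) + Q(t)·φ(t) ≤ V·C•(t) + ∑_{s∈S}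 D_s(t)·(a•_s(t) − b•_s(t)) + Q(t)·φ•(t). Then for every T ≥ 1, (1/T)∑_{t=0}^{T-1} (Q(t) + ∑_{s∈S} D_s(t)) ≤ (B + V(C_max − C_min))/ε. -/
/-!
The proof is the Lyapunov drift argument. With `L t = Q t ^ 2 / 2 + (1 / 2) * ∑ s ∈ S, D s t ^ 2`,
squaring the queue recursions (`actual_queue_sq_le`, `virtual_queue_sq_le`) bounds the one-slot
drift `L (t + 1) - L t` by `B + ∑ s ∈ S, D s t * (Di s t - Do s t) + Q t * φ t`. Comparison with
the alternative policy, whose slacks are at least `ε` and whose cost differs from `C t` by at most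
`Cmax - Cmin`, turns this into
`L (t + 1) - L t ≤ B + V * (Cmax - Cmin) - ε * (Q t + ∑ s ∈ S, D s t)`.
Telescoping from `L 0 = 0` and discarding `L T ≥ 0` gives the bound.
-/

/-- One-slot bound on the square of an actual queue of length `d`, with arrivals `i` and offered
service `o`. The cross term `-2 * i * o` is dropped when the queue is not emptied; otherwise the
slack is `(d - o) ^ 2 + 2 * d * i`. -/
lemma actual_queue_sq_le {d i o : ℝ} (hd : 0 ≤ d) (hi : 0 ≤ i) (ho : 0 ≤ o) :
    (d - min o d + i) ^ 2 ≤ d ^ 2 + 2 * (d * (i - o)) + (i ^ 2 + o ^ 2) := by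
  rcases le_total o d with h | h
  · rw [min_eq_left h]
    nlinarith [mul_nonneg hi ho]
  · rw [min_eq_right h]
    nlinarith [sq_nonneg (d - o), mul_nonneg hd hi]

lemma virtual_queue_sq_le (q f : ℝ) :
    (max (q + f) 0) ^ 2 ≤ q ^ 2 + 2 * (q * f) + f ^ 2 := by
  rcases le_total (q + f) 0 with h | h
  · rw [max_eq_right h]
    nlinarith [sq_nonneg (q + f)]
  · rw [max_eq_left h]
    exact (by ring : (q + f) ^ 2 = q ^ 2 + 2 * (q * f) + f ^ 2).le

/-- Deterministic (pathwise) form of Theorem 3: the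
time-averaged total backlog of the actual and virtual queues is bounded by
(B + V(C_max − C_min))/ε. -/
theorem time_average_total_backlog_bound {ι : Type*} (S : Finset ι)
    (D Di Do : ι → ℕ → ℝ) (Q φ C : ℕ → ℝ)
    (V ε B Cmin Cmax : ℝ)
    (hDnn : ∀ s ∈ S, ∀ t : ℕ, 0 ≤ D s t)
    (hDinn : ∀ s ∈ S, ∀ t : ℕ, 0 ≤ Di s t)
    (hDonn : ∀ s ∈ S, ∀ t : ℕ, 0 ≤ Do s t)
    (hD0 : ∀ s ∈ S, D s 0 = 0)
    (hDrec : ∀ s ∈ S, ∀ t : ℕ, D s (t + 1) = D s t - min (Do s t) (D s t) + Di s t)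
    (hQnn : ∀ t : ℕ, 0 ≤ Q t) (hQ0 : Q 0 = 0)
    (hQrec : ∀ t : ℕ, Q (t + 1) = max (Q t + φ t) 0)
    (hV : 0 ≤ V) (hε : 0 < ε)
    (hC : ∀ t : ℕ, Cmin ≤ C t ∧ C t ≤ Cmax)
    (hB : ∀ t : ℕ, (1 / 2) * ∑ s ∈ S, (Di s t ^ 2 + Do s t ^ 2) + φ t ^ 2 / 2 ≤ B)
    (hcomp : ∀ t : ℕ, ∃ (φb Cb : ℝ) (ab bb : ι → ℝ),
      φb ≤ -ε ∧ Cmin ≤ Cb ∧ Cb ≤ Cmax ∧ (∀ s ∈ S, ab s - bb s ≤ -ε) ∧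
      V * C t + ∑ s ∈ S, D s t * (Di s t - Do s t) + Q t * φ t
        ≤ V * Cb + ∑ s ∈ S, D s t * (ab s - bb s) + Q t * φb) :
    ∀ T : ℕ, 1 ≤ T →
      (1 / (T : ℝ)) * ∑ t ∈ Finset.range T, (Q t + ∑ s ∈ S, D s t)
        ≤ (B + V * (Cmax - Cmin)) / ε := by
  have drift : ∀ t : ℕ,
      Q (t + 1) ^ 2 / 2 + (1 / 2) * ∑ s ∈ S, D s (t + 1) ^ 2
          + ε * (Q t + ∑ s ∈ S, D s t)
        ≤ Q t ^ 2 / 2 + (1 / 2) * ∑ s ∈ S, D s t ^ 2 + (B + V * (Cmax - Cmin)) := by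
    intro t
    obtain ⟨φb, Cb, ab, bb, hφb, -, hCb, hab, hle⟩ := hcomp t
    have hDsq : ∑ s ∈ S, D s (t + 1) ^ 2 ≤ ∑ s ∈ S, D s t ^ 2
        + 2 * ∑ s ∈ S, D s t * (Di s t - Do s t) + ∑ s ∈ S, (Di s t ^ 2 + Do s t ^ 2) := by
      rw [Finset.mul_sum, ← Finset.sum_add_distrib, ← Finset.sum_add_distrib]
      refine Finset.sum_le_sum fun s hs => ?_
      rw [hDrec s hs t]
      exact actual_queue_sq_le (hDnn s hs t) (hDinn s hs t) (hDonn s hs t)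
    have hQsq : Q (t + 1) ^ 2 ≤ Q t ^ 2 + 2 * (Q t * φ t) + φ t ^ 2 := by
      rw [hQrec t]
      exact virtual_queue_sq_le _ _
    have hDslack : ∑ s ∈ S, D s t * (ab s - bb s) ≤ (∑ s ∈ S, D s t) * -ε := by
      rw [Finset.sum_mul]
      exact Finset.sum_le_sum fun s hs => mul_le_mul_of_nonneg_left (hab s hs) (hDnn s hs t)
    have hQslack : Q t * φb ≤ Q t * -ε := mul_le_mul_of_nonneg_left hφb (hQnn t)
    have hcost : V * (Cb - C t) ≤ V * (Cmax - Cmin) :=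
      mul_le_mul_of_nonneg_left (by linarith [(hC t).1]) hV
    linarith [hB t]
  have telescoped : ∀ T : ℕ,
      Q T ^ 2 / 2 + (1 / 2) * ∑ s ∈ S, D s T ^ 2
          + ε * ∑ t ∈ Finset.range T, (Q t + ∑ s ∈ S, D s t)
        ≤ T * (B + V * (Cmax - Cmin)) := by
    intro T
    induction T with
    | zero =>
      have h0 : ∑ s ∈ S, D s 0 ^ 2 = 0 :=
        Finset.sum_eq_zero fun s hs => by rw [hD0 s hs]; norm_num
      simp [h0, hQ0]
    | succ n ih =>
      rw [Finset.sum_range_succ]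
      push_cast
      linarith [drift n]
  intro T hT
  have hTpos : (0 : ℝ) < T := by exact_mod_cast hT
  have hL : 0 ≤ Q T ^ 2 / 2 + (1 / 2) * ∑ s ∈ S, D s T ^ 2 := by positivity
  rw [one_div_mul_eq_div, div_le_div_iff₀ hTpos hε]
  linarith [telescoped T]
end
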